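/- Let K be an algebraically closed field, S = K[x_1,…,x_r] the standard graded polynomial ring, J ⊆ S a homogeneous ideal, and A = S/J with Hilbert function h_A(t) = dim_K [A]_t. Fix an integer n and assume n+1 ≤ h_A(n) < C(n+2,2), i.e. the n-binomial expansion of h_A(n) begins with C(n+1,n). Assume further that h_A(n+1) = h_A(n)^{⟨n⟩} − 1 (almost maximal growth). Then the base locus of [J]_n in ℙ^{r−1} is nonempty and is a scheme of dimension either 0 or 1; equivalently, the Krull dimension of S/⟨[J]_n⟩ (the quotient by the ideal generated by the degree-n component of J) is either 1 or 2. -/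

import Mathlib

open MvPolynomial

/-- The Hilbert function of `S/I` in degree `t`: the dimension over `K` of the image of the
space of homogeneous polynomials of degree `t` in the quotient `S/I`. -/
noncomputable def hilb {K : Type*} [Field K] {σ : Type*} (I : Ideal (MvPolynomial σ K)) (t : ℕ) : ℕ :=
  Module.finrank K
    ((homogeneousSubmodule σ K t).map (Ideal.Quotient.mkₐ K I).toLinearMap)

/-- The ideal generated by the degree-`n` component of `I`, i.e. by all homogeneous elements of
`I` of degree `n`.  Its zero locus is the base locus of the linear system `[I]_n`. -/
noncomputable def compIdeal {K : Type*} [Field K] {σ : Type*} (I : Ideal (MvPolynomial σ K)) (n : ℕ) :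
    Ideal (MvPolynomial σ K) :=
  Ideal.span ((I : Set (MvPolynomial σ K)) ∩ (homogeneousSubmodule σ K n : Set (MvPolynomial σ K)))

/-- Macaulay's bound `k^{⟨i⟩}`: if `k = C(k_i,i) + C(k_{i-1},i-1) + ⋯ + C(k_j,j)` is the
`i`-binomial expansion of `k`, then `macaulayUp i k = C(k_i+1,i+1) + ⋯ + C(k_j+1,j+1)`. -/
def macaulayUp : ℕ → ℕ → ℕ
  | 0, _ => 0
  | i + 1, k =>
    if k = 0 then 0
    else
      Nat.choose (Nat.findGreatest (fun b => Nat.choose b (i + 1) ≤ k) (k + i + 1) + 1) (i + 2) +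
        macaulayUp i
          (k - Nat.choose (Nat.findGreatest (fun b => Nat.choose b (i + 1) ≤ k) (k + i + 1)) (i + 1))


namespace AMG

open Module

section basics

variable {K : Type*} [Field K] {r : ℕ}

/-- degree `t` forms -/
abbrev HS (K : Type*) [Field K] (r t : ℕ) : Submodule K (MvPolynomial (Fin r) K) :=
  homogeneousSubmodule (Fin r) K t

instance HS_fd (t : ℕ) : FiniteDimensional K (HS K r t) :=
  Module.Finite.iff_fg.mpr (homogeneousSubmodule_fg (Fin r) K t)

lemma HS_mul (a b : ℕ) : HS K r a * HS K r b = HS K r (a + b) := by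
  have h : ∀ t, HS K r 1 ^ t = HS K r t := fun t => homogeneousSubmodule_one_pow K t
  rw [← h a, ← h b, ← pow_add, h]

lemma fd_of_le {n : ℕ} {W : Submodule K (MvPolynomial (Fin r) K)} (h : W ≤ HS K r n) :
    FiniteDimensional K W :=
  Submodule.finiteDimensional_of_le h

/-- codimension in `HS n` -/
noncomputable def cd (n : ℕ) (W : Submodule K (MvPolynomial (Fin r) K)) : ℕ :=
  finrank K (HS K r n) - finrank K W

/-- `ℓ * HS (n-1)` -/
noncomputable def LL (ℓ : MvPolynomial (Fin r) K) : ℕ → Submodule K (MvPolynomial (Fin r) K)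
  | 0 => ⊥
  | n + 1 => Submodule.span K {ℓ} * HS K r n

/-- colon -/
noncomputable def col (n : ℕ) (W : Submodule K (MvPolynomial (Fin r) K)) (ℓ : MvPolynomial (Fin r) K) :
    Submodule K (MvPolynomial (Fin r) K) :=
  HS K r n ⊓ W.comap (LinearMap.mulLeft K ℓ)

lemma mem_col {n : ℕ} {W : Submodule K (MvPolynomial (Fin r) K)} {ℓ f : MvPolynomial (Fin r) K} :
    f ∈ col n W ℓ ↔ f ∈ HS K r n ∧ ℓ * f ∈ W := by
  simp [col]

lemma col_le {n : ℕ} {W : Submodule K (MvPolynomial (Fin r) K)} {ℓ : MvPolynomial (Fin r) K} :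
    col n W ℓ ≤ HS K r n := inf_le_left

lemma LL_succ (ℓ : MvPolynomial (Fin r) K) (n : ℕ) :
    LL ℓ (n + 1) = (HS K r n).map (LinearMap.mulLeft K ℓ) := by
  ext f
  simp [LL, Submodule.mem_span_singleton_mul]

lemma mem_LL_succ {ℓ : MvPolynomial (Fin r) K} {n : ℕ} {f : MvPolynomial (Fin r) K} :
    f ∈ LL ℓ (n + 1) ↔ ∃ g ∈ HS K r n, ℓ * g = f := by
  simp [LL, Submodule.mem_span_singleton_mul]

lemma LL_le {ℓ : MvPolynomial (Fin r) K} (hℓ : ℓ ∈ HS K r 1) (n : ℕ) : LL ℓ n ≤ HS K r n := by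
  cases n with
  | zero => simp [LL]
  | succ n =>
    rw [LL, add_comm n 1, ← HS_mul]
    exact mul_le_mul' (by simpa using hℓ) le_rfl

lemma HS_mul_LL (k n : ℕ) (ℓ : MvPolynomial (Fin r) K) :
    HS K r k * LL ℓ (n + 1) = LL ℓ (k + n + 1) := by
  rw [LL, LL, mul_left_comm, HS_mul]

lemma HS_mul_LL_le (k n : ℕ) (ℓ : MvPolynomial (Fin r) K) :
    HS K r k * LL ℓ n ≤ LL ℓ (k + n) := by
  cases n with
  | zero => simp [LL]
  | succ n => rw [HS_mul_LL, ← add_assoc]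

lemma fr_map {E F : Type*} [AddCommGroup E] [Module K E] [AddCommGroup F] [Module K F]
    (f : E →ₗ[K] F) (N : Submodule K E) [FiniteDimensional K N] :
    finrank K (N.map f) + finrank K (N ⊓ LinearMap.ker f : Submodule K E) = finrank K N := by
  have h := LinearMap.finrank_range_add_finrank_ker (f.domRestrict N)
  rw [LinearMap.range_domRestrict, LinearMap.ker_domRestrict] at h
  rw [← h]
  congr 1
  rw [← Submodule.map_comap_subtype, ← LinearEquiv.finrank_eq
    (Submodule.equivMapOfInjective N.subtype N.injective_subtype _)]

variable {n : ℕ} {W W' : Submodule K (MvPolynomial (Fin r) K)} {ℓ : MvPolynomial (Fin r) K}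

lemma fr_le (h : W ≤ HS K r n) : finrank K W ≤ finrank K (HS K r n) :=
  Submodule.finrank_mono h

lemma cd_anti (h : W ≤ W') (h' : W' ≤ HS K r n) : cd n W' ≤ cd n W := by
  have := fd_of_le h'
  have := Submodule.finrank_mono h
  unfold cd; omega

lemma eq_of_cd_le (h : W ≤ W') (h' : W' ≤ HS K r n) (hc : cd n W ≤ cd n W') : W = W' := by
  have := fd_of_le h'
  have h1 := fr_le h'
  have h2 := fr_le (h.trans h')
  apply Submodule.eq_of_le_of_finrank_le h
  unfold cd at hc; omega

lemma cd_top : cd n (HS K r n) = 0 := by simp [cd]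

lemma eq_of_cd_zero (h : W ≤ HS K r n) (hc : cd n W = 0) : W = HS K r n :=
  eq_of_cd_le h le_rfl (by omega)

/-- the map `HS n → P ⧸ W` given by mult by `ℓ` -/
noncomputable def AA (W : Submodule K (MvPolynomial (Fin r) K)) (n : ℕ) (ℓ : MvPolynomial (Fin r) K) :
    HS K r n →ₗ[K] (MvPolynomial (Fin r) K ⧸ W) :=
  W.mkQ ∘ₗ LinearMap.mulLeft K ℓ ∘ₗ (HS K r n).subtype

lemma AA_range : LinearMap.range (AA W n ℓ) = (HS K r n).map (W.mkQ ∘ₗ LinearMap.mulLeft K ℓ) := by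
  rw [AA, ← LinearMap.comp_assoc, LinearMap.range_comp, Submodule.range_subtype]

lemma cd_col : cd n (col n W ℓ) = finrank K (LinearMap.range (AA W n ℓ)) := by
  have h := fr_map (W.mkQ ∘ₗ LinearMap.mulLeft K ℓ) (HS K r n)
  rw [AA_range]
  have : (HS K r n ⊓ LinearMap.ker (W.mkQ ∘ₗ LinearMap.mulLeft K ℓ)) = col n W ℓ := by
    rw [LinearMap.ker_comp, Submodule.ker_mkQ, col]
  rw [this] at h
  unfold cd; omega

lemma cd_add (hW : W ≤ HS K r (n + 1)) (hℓ : ℓ ∈ HS K r 1) :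
    cd (n + 1) W = cd (n + 1) (W ⊔ LL ℓ (n + 1)) + cd n (col n W ℓ) := by
  have hle : W ⊔ LL ℓ (n + 1) ≤ HS K r (n + 1) := sup_le hW (LL_le hℓ _)
  have := fd_of_le hle
  rw [cd_col, AA_range]
  have h := fr_map W.mkQ (W ⊔ LL ℓ (n + 1))
  rw [Submodule.ker_mkQ, inf_eq_right.mpr le_sup_left, Submodule.map_sup, LL_succ,
    ← Submodule.map_comp, Submodule.mkQ_map_self, bot_sup_eq] at h
  rw [← LL_succ] at h
  have h1 := fr_le hle
  unfold cd
  omega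

lemma cd_add_one (hW : W ≤ HS K r n) (F : MvPolynomial (Fin r) K) :
    cd n W ≤ cd n (W ⊔ Submodule.span K {F}) + 1 := by
  have := fd_of_le hW
  have h := Submodule.finrank_add_le_finrank_add_finrank W (Submodule.span K {F})
  have h2 : finrank K (Submodule.span K {F}) ≤ 1 := by
    simpa using finrank_span_le_card (R := K) ({F} : Set (MvPolynomial (Fin r) K))
  unfold cd; omega

end basics


set_option linter.unusedSectionVars false

section generic

lemma rk_line {K E : Type*} [Field K] [AddCommGroup E] [Module K E] {k : ℕ} (a b : Fin k → E)
    (ha : LinearIndependent K a) :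
    {t : K | ¬ LinearIndependent K (fun i => a i + t • b i)}.Finite := by
  obtain ⟨φ, hφ⟩ := LinearMap.exists_leftInverse_of_injective
    (Fintype.linearCombination K a) (by
      rw [LinearMap.ker_eq_bot]
      exact ha.fintypeLinearCombination_injective)
  have hφa : ∀ i, φ (a i) = Pi.single i 1 := by
    intro i
    have := LinearMap.congr_fun hφ (Pi.single i 1)
    simpa [Fintype.linearCombination_apply_single] using this
  let M : Matrix (Fin k) (Fin k) K := fun i j => φ (b i) j
  let p : Polynomial K := (1 + (Polynomial.X : Polynomial K) • M.map Polynomial.C).det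
  have hp0 : p.eval 0 = 1 := by
    simp only [p]
    rw [_root_.eval_det_add_X_smul]
    simp
  have hp : p ≠ 0 := by
    intro h
    rw [h] at hp0
    simp at hp0
  refine (Polynomial.finite_setOfPred_isRoot hp).subset ?_
  intro t ht
  by_contra hroot
  apply ht
  have hdet : (1 + t • M).det ≠ 0 := by
    intro h
    apply hroot
    have : p.eval t = (1 + t • M).det := by
      simp only [p]
      rw [← Polynomial.coe_evalRingHom, RingHom.map_det]
      congr 1
      ext i j
      simp [Matrix.one_apply, apply_ite]
      ring
    show p.IsRoot t
    rw [Polynomial.IsRoot, this, h]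
  have hli := Matrix.linearIndependent_rows_of_det_ne_zero hdet
  apply LinearIndependent.of_comp φ
  have e : (φ ∘ fun i => a i + t • b i) = fun i => (1 + t • M) i := by
    ext i j
    have : (1 + t • M) i j = (1 : Matrix (Fin k) (Fin k) K) i j + t * φ (b i) j := rfl
    rw [this]
    simp [hφa, Matrix.one_apply, Pi.single_apply, eq_comm]
  rw [e]
  exact hli

variable {K E U : Type*} [Field K] [AddCommGroup E] [Module K E] [AddCommGroup U] [Module K U]
  [FiniteDimensional K U]

lemma le_rank_of {k : ℕ} (A : U →ₗ[K] E) (v : Fin k → E) (hv : LinearIndependent K v)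
    (h : ∀ i, v i ∈ LinearMap.range A) : k ≤ finrank K (LinearMap.range A) := by
  have : LinearIndependent K (fun i => (⟨v i, h i⟩ : LinearMap.range A)) :=
    LinearIndependent.of_comp (LinearMap.range A).subtype hv
  simpa using this.fintype_card_le_finrank

lemma exists_indep (A : U →ₗ[K] E) : ∃ v : Fin (finrank K (LinearMap.range A)) → U,
    LinearIndependent K (fun i => A (v i)) := by
  have b := Module.finBasis K (LinearMap.range A)
  have : ∀ i, ∃ u, A u = (b i : E) := fun i => (b i).2
  choose v hv using this
  refine ⟨v, ?_⟩
  simp only [hv]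
  exact b.linearIndependent.map' _ (Submodule.ker_subtype _)

lemma rank_semi (A B : U →ₗ[K] E) :
    {t : K | finrank K (LinearMap.range (A + t • B)) < finrank K (LinearMap.range A)}.Finite := by
  obtain ⟨v, hv⟩ := exists_indep A
  refine (rk_line (fun i => A (v i)) (fun i => B (v i)) hv).subset ?_
  intro t ht hli
  have := le_rank_of (A + t • B) _ hli (fun i => ⟨v i, by simp⟩)
  simp only [Set.mem_ofPred_eq] at ht
  omega

lemma rank_jump (A B : U →ₗ[K] E) (z : U) (hz : A z = 0) (hB : B z ∉ LinearMap.range A) :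
    {t : K | finrank K (LinearMap.range (A + t • B)) ≤ finrank K (LinearMap.range A)}.Finite := by
  obtain ⟨v, hv⟩ := exists_indep A
  let a : Fin (finrank K (LinearMap.range A) + 1) → E := Fin.cons (B z) (fun i => A (v i))
  let b : Fin (finrank K (LinearMap.range A) + 1) → E := Fin.cons 0 (fun i => B (v i))
  have ha : LinearIndependent K a := by
    refine (linearIndependent_finCons).mpr ⟨hv, ?_⟩
    intro h
    apply hB
    refine Submodule.span_le.mpr ?_ h
    rintro _ ⟨i, rfl⟩
    exact ⟨v i, rfl⟩
  refine ((rk_line a b ha).union (Set.finite_singleton 0)).subset ?_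
  intro t ht
  by_contra hcon
  simp only [Set.mem_union, Set.mem_ofPred_eq, not_or, not_not, Set.mem_singleton_iff] at hcon
  obtain ⟨hli, ht0⟩ := hcon
  have := le_rank_of (A + t • B) _ hli (by
    intro i
    refine Fin.cases ?_ (fun i => ?_) i
    · refine ⟨t⁻¹ • z, ?_⟩
      simp [a, b, hz, smul_smul, ht0]
    · exact ⟨v i, by simp [a, b]⟩)
  simp only [Set.mem_ofPred_eq] at ht
  omega

end generic

section big
variable {K : Type*} [Field K] [Infinite K] {r : ℕ}

def Big (U : Set (MvPolynomial (Fin r) K)) : Prop :=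
  (∃ ℓ ∈ HS K r 1, ℓ ∈ U) ∧ ∀ ℓ ∈ U, ℓ ∈ HS K r 1 → ∀ x ∈ HS K r 1, {t : K | ℓ + t • x ∉ U}.Finite

lemma Big.inter {U V : Set (MvPolynomial (Fin r) K)} (hU : Big U) (hV : Big V) : Big (U ∩ V) := by
  refine ⟨?_, ?_⟩
  · obtain ⟨a, ha, haU⟩ := hU.1
    obtain ⟨b, hb, hbV⟩ := hV.1
    have h1 := hU.2 a haU ha (b - a) (sub_mem hb ha)
    have h2 := hV.2 b hbV hb (a - b) (sub_mem ha hb)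
    have h3 : {t : K | b + (1 - t) • (a - b) ∉ V}.Finite :=
      h2.preimage (f := fun t : K => 1 - t) (fun x _ y _ h => by simpa using h)
    obtain ⟨t, ht⟩ := (h1.union h3).exists_notMem
    simp only [Set.mem_union, Set.mem_ofPred_eq, not_or, not_not] at ht
    refine ⟨a + t • (b - a), add_mem ha (Submodule.smul_mem _ _ (sub_mem hb ha)), ht.1, ?_⟩
    have : a + t • (b - a) = b + (1 - t) • (a - b) := by module
    rw [this]
    exact ht.2
  · rintro ℓ ⟨h1, h2⟩ hℓ x hx
    refine ((hU.2 ℓ h1 hℓ x hx).union (hV.2 ℓ h2 hℓ x hx)).subset ?_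
    intro t ht
    by_contra hcon
    simp only [Set.mem_union, Set.mem_ofPred_eq, not_or, not_not] at hcon
    exact ht hcon

lemma Big.ex {U : Set (MvPolynomial (Fin r) K)} (hU : Big U) : ∃ ℓ ∈ HS K r 1, ℓ ∈ U := hU.1

/-- linear forms generic for `W` -/
def gs (n : ℕ) (W : Submodule K (MvPolynomial (Fin r) K)) : Set (MvPolynomial (Fin r) K) :=
  {ℓ | ∀ ℓ' ∈ HS K r 1, cd n (W ⊔ LL ℓ n) ≤ cd n (W ⊔ LL ℓ' n)}

lemma AA_line (W : Submodule K (MvPolynomial (Fin r) K)) (n : ℕ) (ℓ x : MvPolynomial (Fin r) K) (t : K) :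
    AA W n (ℓ + t • x) = AA W n ℓ + t • AA W n x := by
  ext f
  simp only [AA, LinearMap.coe_comp, Function.comp_apply, LinearMap.mulLeft_apply,
    LinearMap.add_apply, LinearMap.smul_apply]
  rw [← map_smul, ← map_add]
  congr 1
  simp [add_mul]

lemma gs_big {n : ℕ} {W : Submodule K (MvPolynomial (Fin r) K)} (hW : W ≤ HS K r n) :
    Big (gs n W) := by
  cases n with
  | zero =>
    refine ⟨⟨0, zero_mem _, ?_⟩, ?_⟩
    · intro ℓ' _
      simp [LL]
    · intro ℓ _ _ x _
      convert Set.finite_empty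
      ext t
      simp [gs, LL]
  | succ n =>
    have key := fun (ℓ : MvPolynomial (Fin r) K) (hℓ : ℓ ∈ HS K r 1) => cd_add hW hℓ
    simp only [cd_col] at key
    refine ⟨?_, ?_⟩
    · let f : HS K r 1 → ℕ := fun ℓ => cd (n+1) (W ⊔ LL (ℓ : MvPolynomial (Fin r) K) (n+1))
      obtain ⟨m, hm⟩ : ∃ m, ∀ y, f m ≤ f y := by
        have hne : (Set.range f).Nonempty := ⟨_, 0, rfl⟩
        obtain ⟨m, hm⟩ := Nat.sInf_mem hne
        exact ⟨m, fun y => hm ▸ Nat.sInf_le ⟨y, rfl⟩⟩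
      exact ⟨m, m.2, fun ℓ' h' => hm ⟨ℓ', h'⟩⟩
    · intro ℓ hg hℓ x hx
      refine (rank_semi (AA W n ℓ) (AA W n x)).subset ?_
      intro t ht
      simp only [Set.mem_ofPred_eq, gs, not_forall, not_le] at ht
      obtain ⟨ℓ', hℓ', h1⟩ := ht
      have h2 := hg ℓ' hℓ'
      have hm : ℓ + t • x ∈ HS K r 1 := add_mem hℓ (Submodule.smul_mem _ _ hx)
      have k1 := key _ hℓ
      have k2 := key _ hm
      simp only [Set.mem_ofPred_eq]
      rw [← AA_line]
      omega

lemma gs_le {n : ℕ} {W : Submodule K (MvPolynomial (Fin r) K)} {ℓ ℓ' : MvPolynomial (Fin r) K}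
    (h : ℓ ∈ gs n W) (h' : ℓ' ∈ HS K r 1) : cd n (W ⊔ LL ℓ n) ≤ cd n (W ⊔ LL ℓ' n) := h ℓ' h'

/-- socle lemma -/
lemma socle {n : ℕ} {W : Submodule K (MvPolynomial (Fin r) K)} {ℓ : MvPolynomial (Fin r) K}
    (hW : W ≤ HS K r (n+1)) (hℓ : ℓ ∈ HS K r 1) (hg : ℓ ∈ gs (n+1) W)
    (hinj : ∀ f ∈ HS K r (n+1), ℓ * f ∈ HS K r 1 * W → f ∈ W)
    {z : MvPolynomial (Fin r) K} (hz : z ∈ HS K r n) (hzW : ℓ * z ∈ W)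
    {x : MvPolynomial (Fin r) K} (hx : x ∈ HS K r 1) : x * z ∈ W := by
  have key := fun (ℓ : MvPolynomial (Fin r) K) (hℓ : ℓ ∈ HS K r 1) => cd_add hW hℓ
  simp only [cd_col] at key
  have hr : AA W n x ⟨z, hz⟩ ∈ LinearMap.range (AA W n ℓ) := by
    by_contra hcon
    have hfin := rank_jump (AA W n ℓ) (AA W n x) ⟨z, hz⟩ (by simpa [AA] using hzW) hcon
    obtain ⟨t, ht⟩ := hfin.exists_notMem
    apply ht
    have hm : ℓ + t • x ∈ HS K r 1 := add_mem hℓ (Submodule.smul_mem _ _ hx)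
    have k1 := key _ hℓ
    have k2 := key _ hm
    have k3 := hg _ hm
    simp only [Set.mem_ofPred_eq]
    rw [← AA_line]
    omega
  obtain ⟨⟨y, hy⟩, hyx⟩ := hr
  have h1 : ℓ * y - x * z ∈ W := by
    simpa [AA, Submodule.Quotient.eq] using hyx
  have h2 : ℓ * y ∈ W := by
    have hm1 : ℓ * y ∈ HS K r (n+1) := LL_le hℓ _ (mem_LL_succ.mpr ⟨y, hy, rfl⟩)
    apply hinj _ hm1
    have e : ℓ * (ℓ * y) = ℓ * (ℓ * y - x * z) + x * (ℓ * z) := by ring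
    rw [e]
    exact add_mem (Submodule.mul_mem_mul hℓ h1) (Submodule.mul_mem_mul hx hzW)
  have := sub_mem h2 h1
  simpa using this

end big


section green

def TT (n : ℕ) : ℕ → ℕ
  | 0 => 0
  | s + 1 => TT n s + (n + 1 - s)

lemma TT_a (n j d : ℕ) (hj : 1 ≤ j) : TT (n+1) (j + d + 1) ≤ TT (n+1) j + TT n (d + 1) := by
  induction d with
  | zero => simp only [TT]; omega
  | succ d ih =>
    have e1 : TT (n+1) (j + (d+1) + 1) = TT (n+1) (j + d + 1) + (n + 1 + 1 - (j + d + 1)) := rfl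
    have e2 : TT n (d + 1 + 1) = TT n (d + 1) + (n + 1 - (d + 1)) := rfl
    omega

lemma TT_b (n s : ℕ) (hs : s ≤ n + 1) : TT (n+1) s = TT n s + s := by
  induction s with
  | zero => rfl
  | succ s ih =>
    have := ih (by omega)
    simp only [TT]
    omega

lemma TT_mono (n : ℕ) : Monotone (TT n) := monotone_nat_of_le_succ (fun s => by simp [TT])

variable {K : Type*} [Field K] [Infinite K] {r : ℕ}

lemma LL_mul_mem {n : ℕ} {g h f : MvPolynomial (Fin r) K} (hh : h ∈ HS K r 1) (hf : f ∈ LL g n) :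
    h * f ∈ LL g (n + 1) := by
  have := HS_mul_LL_le 1 n g (Submodule.mul_mem_mul hh hf)
  rwa [add_comm] at this

lemma green_aux : ∀ (n b s : ℕ) (W : Submodule K (MvPolynomial (Fin r) K)), W ≤ HS K r n →
    cd n W = b → s ≤ n → b < TT n (s + 1) → ∃ ℓ ∈ HS K r 1, cd n (W ⊔ LL ℓ n) ≤ s := by
  intro n
  induction n with
  | zero =>
    intro b s W hW hb hs hlt
    obtain rfl : s = 0 := by omega
    refine ⟨0, zero_mem _, ?_⟩
    simp [TT] at hlt
    simp [LL]
    omega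
  | succ n ihn =>
    intro b
    induction b using Nat.strong_induction_on with
    | _ b ihb =>
    intro s W hW hb hs hlt
    obtain ⟨h, hh, hgs⟩ := (gs_big hW).ex
    refine ⟨h, hh, ?_⟩
    by_contra hcon
    push Not at hcon
    have hWh : W ⊔ LL h (n+1) ≤ HS K r (n+1) := sup_le hW (LL_le hh _)
    obtain ⟨c, hc⟩ : ∃ c, cd (n+1) (W ⊔ LL h (n+1)) = c := ⟨_, rfl⟩
    have hcb : c ≤ b := by
      rw [← hc, ← hb]; exact cd_anti le_sup_left hWh
    have hcb' : c < b := by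
      refine lt_of_le_of_ne hcb ?_
      intro hEq
      have hall : ∀ ℓ ∈ HS K r 1, LL ℓ (n+1) ≤ W := by
        intro ℓ hℓ
        have h1 := gs_le hgs hℓ
        have h2 : W = W ⊔ LL ℓ (n+1) := eq_of_cd_le le_sup_left (sup_le hW (LL_le hℓ _)) (by omega)
        rw [h2]; exact le_sup_right
      have htop : HS K r (n+1) ≤ W := by
        rw [add_comm n 1, ← HS_mul]
        rw [Submodule.mul_le]
        intro ℓ hℓ f hf
        exact hall ℓ hℓ (mem_LL_succ.mpr ⟨f, hf, rfl⟩)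
      have : W = HS K r (n+1) := le_antisymm hW htop
      rw [this, cd_top] at hb
      omega
    obtain ⟨j, hj1, hj2⟩ : ∃ j, c < TT (n+1) (j+1) ∧ (j = 0 ∨ TT (n+1) j ≤ c) := by
      have hex : ∃ j, c < TT (n+1) (j+1) := ⟨s, by omega⟩
      classical
      refine ⟨Nat.find hex, Nat.find_spec hex, ?_⟩
      rcases Nat.eq_zero_or_pos (Nat.find hex) with h0 | h0
      · exact Or.inl h0
      · right
        have := Nat.find_min hex (m := Nat.find hex - 1) (by omega)
        rw [Nat.sub_add_cancel h0] at this
        omega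
    have hjs : j ≤ s := by
      by_contra hjs
      rcases hj2 with h0 | h0
      · omega
      · have := TT_mono (n+1) (show s + 1 ≤ j by omega)
        omega
    have hadd := cd_add hW hh
    obtain ⟨ℓ1, hℓ1, h1⟩ := ihb c hcb' j _ hWh hc (by omega) hj1
    have hcol : cd n (col n W h) = b - c := by omega
    have h2 : ∃ ℓ ∈ HS K r 1, cd n (col n W h ⊔ LL ℓ n) ≤ s - j := by
      rcases Nat.eq_zero_or_pos j with h0 | h0
      · subst h0
        have hsn : s ≤ n := by
          simp only [TT] at hj1
          omega
        have := TT_b n (s+1) (by omega)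
        exact ihn (b - c) s _ col_le hcol hsn (by omega)
      · have := TT_a n j (s - j) h0
        rw [show j + (s - j) + 1 = s + 1 by omega] at this
        exact ihn (b - c) (s - j) _ col_le hcol (by omega) (by omega)
    obtain ⟨ℓ2, hℓ2, h2⟩ := h2
    obtain ⟨g, hg, hg1, hg2⟩ := ((gs_big hWh).inter (gs_big (col_le (n := n) (W := W) (ℓ := h)))).ex
    have hWg : W ⊔ LL g (n+1) ≤ HS K r (n+1) := sup_le hW (LL_le hg _)
    have k1 := gs_le hg1 hℓ1
    have k2 := gs_le hg2 hℓ2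
    have k3 := gs_le hgs hg
    have k4 := cd_add hWg hh
    have k5 : cd n (col n (W ⊔ LL g (n+1)) h) ≤ cd n (col n W h ⊔ LL g n) := by
      apply cd_anti _ col_le
      apply sup_le
      · intro f hf
        rw [mem_col] at hf ⊢
        exact ⟨hf.1, Submodule.mem_sup_left hf.2⟩
      · intro f hf
        rw [mem_col]
        exact ⟨LL_le hg _ hf, Submodule.mem_sup_right (LL_mul_mem hh hf)⟩
    rw [sup_right_comm] at k4
    omega

variable {n s : ℕ} {W : Submodule K (MvPolynomial (Fin r) K)} {ℓ : MvPolynomial (Fin r) K}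

lemma green (hW : W ≤ HS K r n) (hs : s ≤ n) (hb : cd n W < TT n (s+1)) (hℓ : ℓ ∈ gs n W) :
    cd n (W ⊔ LL ℓ n) ≤ s := by
  obtain ⟨ℓ', h1, h2⟩ := green_aux n _ s W hW rfl hs hb
  exact (gs_le hℓ h1).trans h2

lemma green0 (hW : W ≤ HS K r n) (hb : cd n W ≤ n) (hℓ : ℓ ∈ gs n W) (hℓ1 : ℓ ∈ HS K r 1) :
    W ⊔ LL ℓ n = HS K r n := by
  have := green (s := 0) hW (by omega) (by simp [TT]; omega) hℓ
  exact eq_of_cd_zero (sup_le hW (LL_le hℓ1 _)) (by omega)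

/-- top case -/
lemma green_top (hW : W ≤ HS K r n) (hb : cd n W ≤ TT n (n+1)) (hℓ : ℓ ∈ gs n W)  :
    cd n (W ⊔ LL ℓ n) ≤ n + 1 := by
  rcases lt_or_eq_of_le hb with h | h
  · exact (green hW le_rfl h hℓ).trans (by omega)
  · have hpos : 0 < cd n W := by
      rw [h]; simp [TT]
    obtain ⟨F, hF, hFW⟩ : ∃ F ∈ HS K r n, F ∉ W := by
      by_contra hcon
      push Not at hcon
      have : W = HS K r n := le_antisymm hW hcon
      rw [this, cd_top] at hpos
      omega
    have hFle : Submodule.span K {F} ≤ HS K r n := by simpa using hF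
    have hV : W ⊔ Submodule.span K {F} ≤ HS K r n := sup_le hW hFle
    have hlt : cd n (W ⊔ Submodule.span K {F}) < cd n W := by
      by_contra hcon
      have : W = W ⊔ Submodule.span K {F} := eq_of_cd_le le_sup_left hV (by omega)
      apply hFW
      rw [this]
      exact Submodule.mem_sup_right (Submodule.mem_span_singleton_self F)
    obtain ⟨ℓ', h1, h2⟩ := green_aux n _ n _ hV rfl le_rfl (by omega)
    have h3 := gs_le hℓ h1
    have h4 := cd_add_one (sup_le hW (LL_le h1 n)) F
    rw [sup_right_comm] at h4
    omega

end green


section ext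

variable {K : Type*} [Field K] {r : ℕ} {U : Type*} [AddCommGroup U] [Module K U]

lemma HS_one_span : HS K r 1 = Submodule.span K (Set.range X) := homogeneousSubmodule_one_eq_span_X

lemma HS_zero : HS K r 0 = 1 := homogeneousSubmodule_zero _

lemma X_mem (i : Fin r) : (X i : MvPolynomial (Fin r) K) ∈ HS K r 1 := by
  rw [HS_one_span]; exact Submodule.subset_span ⟨i, rfl⟩

lemma mul_mem_HS {a b c : ℕ} {f g : MvPolynomial (Fin r) K} (hf : f ∈ HS K r a) (hg : g ∈ HS K r b)
    (h : a + b = c) : f * g ∈ HS K r c := by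
  rw [← h, ← HS_mul]; exact Submodule.mul_mem_mul hf hg

lemma ext_lemma (m : ℕ) (A : Fin r → MvPolynomial (Fin r) K →ₗ[K] U)
    (hA : ∀ i j, ∀ f ∈ HS K r m, A i (X j * f) = A j (X i * f)) :
    ∃ θ : MvPolynomial (Fin r) K →ₗ[K] U, ∀ i, ∀ f ∈ HS K r (m + 1), θ (X i * f) = A i f := by
  classical
  let c : (Fin r →₀ ℕ) → U := fun d =>
    if h : d.support.Nonempty then A h.choose (monomial (d - Finsupp.single h.choose 1) 1) else 0
  let θ := (basisMonomials (Fin r) K).constr K c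
  have hθ : ∀ d, θ (monomial d 1) = c d := fun d => by
    have := (basisMonomials (Fin r) K).constr_basis K c d
    simpa using this
  refine ⟨θ, ?_⟩
  have key : ∀ i, ∀ e : Fin r →₀ ℕ, e.degree = m + 1 →
      θ (X i * monomial e 1) = A i (monomial e 1) := by
    intro i e he
    have e1 : (X i * monomial e 1 : MvPolynomial (Fin r) K) = monomial (Finsupp.single i 1 + e) 1 := by
      rw [X, monomial_mul, one_mul]
    rw [e1, hθ]
    have hne : (Finsupp.single i 1 + e).support.Nonempty := by
      refine ⟨i, ?_⟩
      simp
    have hc : c (Finsupp.single i 1 + e) = A hne.choose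
        (monomial (Finsupp.single i 1 + e - Finsupp.single hne.choose 1) 1) := dif_pos hne
    rw [hc]
    have hj := hne.choose_spec
    generalize hne.choose = j at *
    by_cases hij : i = j
    · subst hij
      congr 2
      simp
    · have hej : e j ≠ 0 := by
        simpa [Finsupp.single_apply, hij] using hj
      obtain ⟨e', rfl⟩ : ∃ e', e = Finsupp.single j 1 + e' := by
        refine ⟨e - Finsupp.single j 1, ?_⟩
        rw [add_tsub_cancel_of_le]
        rw [Finsupp.single_le_iff]; omega
      have hd : (monomial e' 1 : MvPolynomial (Fin r) K) ∈ HS K r m := by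
        rw [mem_homogeneousSubmodule]
        apply isHomogeneous_monomial
        simp at he
        omega
      have := hA j i _ hd
      rw [X, X, monomial_mul, monomial_mul] at this
      rw [one_mul] at this
      rw [← this, add_left_comm, add_tsub_cancel_left]
  intro i f hf
  have hs := f.as_sum
  rw [hs, Finset.mul_sum, map_sum, map_sum]
  refine Finset.sum_congr rfl fun d hd => ?_
  have h1 : (monomial d (coeff d f) : MvPolynomial (Fin r) K) = coeff d f • monomial d 1 := by
    simp [smul_monomial]
  rw [h1, mul_smul_comm, map_smul, map_smul, key]
  rw [mem_homogeneousSubmodule] at hf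
  have := hf (mem_support_iff.mp hd)
  rw [← this, Finsupp.degree_eq_weight_one]
  rfl

lemma factor_lemma {E F : Type*} [AddCommGroup E] [Module K E] [AddCommGroup F] [Module K F]
    (a : E →ₗ[K] F) (b : E →ₗ[K] U) (h : ∀ x, a x = 0 → b x = 0) :
    ∃ c : F →ₗ[K] U, ∀ x, c (a x) = b x := by
  have hk : LinearMap.ker a ≤ LinearMap.ker b := fun x hx => h x hx
  obtain ⟨c, hc⟩ := LinearMap.exists_extend
    ((LinearMap.ker a).liftQ b hk ∘ₗ a.quotKerEquivRange.symm.toLinearMap)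
  refine ⟨c, fun x => ?_⟩
  have := LinearMap.congr_fun hc ⟨a x, ⟨x, rfl⟩⟩
  have e : (⟨a x, ⟨x, rfl⟩⟩ : LinearMap.range a) = a.quotKerEquivRange (Submodule.Quotient.mk x) := rfl
  simp only [LinearMap.comp_apply, Submodule.subtype_apply, LinearEquiv.coe_coe] at this
  rw [this, e, LinearEquiv.symm_apply_apply]
  rfl

end ext

section CL

variable {K : Type*} [Field K] {r : ℕ} {n k : ℕ} {W W' : Submodule K (MvPolynomial (Fin r) K)}
  {ℓ : MvPolynomial (Fin r) K}

lemma up_le (k : ℕ) (hW : W ≤ HS K r n) : HS K r k * W ≤ HS K r (k + n) := by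
  rw [← HS_mul]; exact mul_le_mul' le_rfl hW

lemma up1_le (hW : W ≤ HS K r n) : HS K r 1 * W ≤ HS K r (n + 1) := by
  rw [add_comm]; exact up_le 1 hW

lemma up_up (a b : ℕ) (W : Submodule K (MvPolynomial (Fin r) K)) :
    HS K r a * (HS K r b * W) = HS K r (a + b) * W := by
  rw [← mul_assoc, HS_mul]

lemma up_sup (k n : ℕ) (W : Submodule K (MvPolynomial (Fin r) K)) (ℓ : MvPolynomial (Fin r) K) :
    HS K r k * (W ⊔ LL ℓ (n + 1)) = HS K r k * W ⊔ LL ℓ (k + n + 1) := by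
  rw [Submodule.mul_sup, HS_mul_LL]

lemma up1_sup (n : ℕ) (W : Submodule K (MvPolynomial (Fin r) K)) (ℓ : MvPolynomial (Fin r) K) :
    HS K r 1 * (W ⊔ LL ℓ (n + 1)) = HS K r 1 * W ⊔ LL ℓ (n + 1 + 1) := by
  rw [up_sup, add_comm 1 n]

lemma CL_step {p : ℕ} (hW : W ≤ HS K r (p + 1)) (hℓ : ℓ ∈ HS K r 1)
    (hs : W ⊔ LL ℓ (p + 1) = HS K r (p + 1))
    (hinj : ∀ f ∈ HS K r (p + 1), ℓ * f ∈ HS K r 1 * W → f ∈ W) :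
    ∀ f ∈ HS K r (p + 2), ℓ * f ∈ HS K r 1 * (HS K r 1 * W) → f ∈ HS K r 1 * W := by
  set W1 := HS K r 1 * W with hW1
  have hA : ∀ i : Fin r, ∃ c : MvPolynomial (Fin r) K →ₗ[K] (MvPolynomial (Fin r) K ⧸ W1),
      ∀ w ∈ W1, ∀ g ∈ HS K r (p + 1), c (w + ℓ * g) = W1.mkQ (X i * g) := by
    intro i
    obtain ⟨c, hc⟩ := factor_lemma
      (LinearMap.coprod W1.subtype (LinearMap.mulLeft K ℓ ∘ₗ (HS K r (p+1)).subtype))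
      (W1.mkQ ∘ₗ LinearMap.mulLeft K (X i) ∘ₗ (HS K r (p+1)).subtype ∘ₗ LinearMap.snd K W1 _) (by
        rintro ⟨⟨w, hw⟩, ⟨g, hg⟩⟩ h
        simp only [LinearMap.coprod_apply, Submodule.subtype_apply, LinearMap.comp_apply,
          LinearMap.mulLeft_apply, LinearMap.snd_apply] at h ⊢
        have h2 : ℓ * g ∈ W1 := by
          have : ℓ * g = - w := by linear_combination h
          rw [this]; exact neg_mem hw
        have h3 := hinj g hg h2
        rw [Submodule.mkQ_apply, Submodule.Quotient.mk_eq_zero]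
        exact Submodule.mul_mem_mul (X_mem i) h3)
    refine ⟨c, fun w hw g hg => ?_⟩
    exact hc (⟨w, hw⟩, ⟨g, hg⟩)
  choose A hA using hA
  obtain ⟨θ, hθ⟩ := ext_lemma (p + 1) A (by
    intro i j f hf
    rw [← hs] at hf
    obtain ⟨w, hw, y, hy, rfl⟩ := Submodule.mem_sup.mp hf
    obtain ⟨g, hg, rfl⟩ := mem_LL_succ.mp hy
    have e : ∀ j, X j * (w + ℓ * g) = X j * w + ℓ * (X j * g) := fun j => by ring
    have hm : ∀ j, X j * g ∈ HS K r (p + 1) := fun j => mul_mem_HS (X_mem j) hg (by omega)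
    rw [e, e, hA i _ (Submodule.mul_mem_mul (X_mem j) hw) _ (hm j),
      hA j _ (Submodule.mul_mem_mul (X_mem i) hw) _ (hm i)]
    congr 1; ring)
  have hk : HS K r 1 * W1 ≤ LinearMap.ker θ := by
    rw [HS_one_span, Submodule.mul_le]
    intro x hx f hf
    induction hx using Submodule.span_induction with
    | mem x hx =>
      obtain ⟨i, rfl⟩ := hx
      rw [LinearMap.mem_ker, hθ i f (up1_le hW hf)]
      have := hA i f hf 0 (zero_mem _)
      simpa using this
    | zero => simp
    | add x y _ _ hx hy => rw [add_mul]; exact add_mem hx hy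
    | smul a x _ hx => rw [smul_mul_assoc]; exact Submodule.smul_mem _ _ hx
  have hl : ∀ f ∈ HS K r (p + 2), θ (ℓ * f) = W1.mkQ f := by
    intro f hf
    have e : HS K r (p + 2) = HS K r 1 * HS K r (p + 1) := by rw [HS_mul]; congr 1; omega
    have : HS K r (p+2) ≤ LinearMap.ker (θ ∘ₗ LinearMap.mulLeft K ℓ - W1.mkQ) := by
      rw [e, HS_one_span, Submodule.mul_le]
      intro x hx f hf
      induction hx using Submodule.span_induction with
      | mem x hx =>
        obtain ⟨i, rfl⟩ := hx
        rw [LinearMap.mem_ker, LinearMap.sub_apply, LinearMap.comp_apply, LinearMap.mulLeft_apply,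
          mul_left_comm, hθ i _ (mul_mem_HS hℓ hf (by omega))]
        have := hA i 0 (zero_mem _) f hf
        rw [zero_add] at this
        rw [this, sub_self]
      | zero => simp
      | add x y _ _ hx hy => rw [add_mul]; exact add_mem hx hy
      | smul a x _ hx => rw [smul_mul_assoc]; exact Submodule.smul_mem _ _ hx
    have := this hf
    rw [LinearMap.mem_ker, LinearMap.sub_apply, sub_eq_zero] at this
    exact this
  intro f hf hff
  have h1 := hl f hf
  have h2 : θ (ℓ * f) = 0 := hk hff
  rw [h2] at h1
  rw [← Submodule.Quotient.mk_eq_zero W1]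
  exact h1.symm

/-- the ideal generated by `W` is never everything in high degree -/
def NA (n : ℕ) (W : Submodule K (MvPolynomial (Fin r) K)) : Prop :=
  ∀ k, HS K r k * W ≠ HS K r (k + n)

lemma NA.mono (h : NA n W') (hle : W ≤ W') (hW' : W' ≤ HS K r n) : NA n W := by
  intro k hk
  apply h k
  apply le_antisymm (up_le k hW')
  rw [← hk]; exact mul_le_mul' le_rfl hle

lemma NA.up (h : NA n W) : NA (n + 1) (HS K r 1 * W) := by
  intro k hk
  apply h (k + 1)
  rw [← up_up, hk]; congr 1; omega

lemma CL_aux (hℓ : ℓ ∈ HS K r 1) (k : ℕ) : ∀ (p : ℕ) (W : Submodule K (MvPolynomial (Fin r) K)),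
    W ≤ HS K r (p + 1) → W ⊔ LL ℓ (p + 1) = HS K r (p + 1) →
    (∀ f ∈ HS K r (p + 1), ℓ * f ∈ HS K r 1 * W → f ∈ W) →
    HS K r k * W = HS K r (k + (p + 1)) → W = HS K r (p + 1) := by
  induction k with
  | zero =>
    intro p W _ _ _ h
    rw [HS_zero, one_mul, zero_add] at h
    exact h
  | succ k ih =>
    intro p W hW hs hinj h
    rw [← up_up] at h
    have := ih (p + 1) _ (up1_le hW) (by
      rw [← up1_sup, hs, HS_mul]; congr 1; omega) (CL_step hW hℓ hs hinj) (by rw [h]; congr 1; omega)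
    apply le_antisymm hW
    intro f hf
    apply hinj f hf
    rw [this]
    exact mul_mem_HS hℓ hf (by omega)

lemma CL {p : ℕ} (hW : W ≤ HS K r (p + 1)) (hℓ : ℓ ∈ HS K r 1)
    (hs : W ⊔ LL ℓ (p + 1) = HS K r (p + 1)) (hpos : 0 < cd (p + 1) W)
    (hc : cd (p + 1) W ≤ cd (p + 2) (HS K r 1 * W)) : NA (p + 1) W := by
  intro k hk
  have e : HS K r 1 * W ⊔ LL ℓ (p + 1 + 1) = HS K r (p + 1 + 1) := by
    rw [← up1_sup, hs, HS_mul]; congr 1; omega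
  have h1 := cd_add (up1_le hW) hℓ
  rw [e, cd_top, zero_add] at h1
  have h2 : W ≤ col (p + 1) (HS K r 1 * W) ℓ := fun w hw =>
    mem_col.mpr ⟨hW hw, Submodule.mul_mem_mul hℓ hw⟩
  have h3 := eq_of_cd_le h2 col_le (by rw [← h1]; exact hc)
  have := CL_aux hℓ k p W hW hs (fun f hf hff => by
    rw [h3]; exact mem_col.mpr ⟨hf, hff⟩) hk
  rw [this, cd_top] at hpos
  omega

/-- growth step -/
lemma cd_up (hW : W ≤ HS K r n) (hℓ : ℓ ∈ HS K r 1) :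
    cd (n + 1) (HS K r 1 * W) ≤ cd (n + 1) (HS K r 1 * W ⊔ LL ℓ (n + 1)) + cd n W := by
  rw [cd_add (up1_le hW) hℓ]
  apply Nat.add_le_add_left
  apply cd_anti _ col_le
  intro w hw
  exact mem_col.mpr ⟨hW hw, Submodule.mul_mem_mul hℓ hw⟩

lemma cd_up' {p : ℕ} (hW : W ≤ HS K r (p + 1)) (hℓ : ℓ ∈ HS K r 1) :
    cd (p + 2) (HS K r 1 * W) ≤ cd (p + 2) (HS K r 1 * (W ⊔ LL ℓ (p + 1))) + cd (p + 1) W := by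
  rw [up1_sup]
  exact cd_up hW hℓ

lemma NA1 (hW : W ≤ HS K r 1) (hne : W ≠ HS K r 1) : NA 1 W := by
  obtain ⟨f, hf, hfW⟩ : ∃ f ∈ HS K r 1, f ∉ W := by
    by_contra hcon
    push Not at hcon
    exact hne (le_antisymm hW hcon)
  obtain ⟨φ, hφ, hφW⟩ := Submodule.exists_le_ker_of_notMem hfW
  let p : Fin r → K := fun i => φ (X i)
  have hev : ∀ x ∈ HS K r 1, eval p x = φ x := by
    intro x hx
    rw [HS_one_span] at hx
    induction hx using Submodule.span_induction with
    | mem x hx =>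
      obtain ⟨i, rfl⟩ := hx
      simp [p]
    | zero => simp
    | add x y _ _ hx hy => simp [hx, hy]
    | smul a x _ hx => simp [hx]
  intro k hk
  have h0 : ∀ g ∈ HS K r k * W, eval p g = 0 := by
    intro g hg
    induction hg using Submodule.mul_induction_on' with
    | mem_mul_mem a ha b hb => rw [map_mul, hev b (hW hb), show φ b = 0 from hφW hb, mul_zero]
    | add x _ y _ hx hy => rw [map_add, hx, hy, add_zero]
  have h1 : ∀ t, f ^ t ∈ HS K r t := by
    intro t
    induction t with
    | zero => rw [pow_zero, HS_zero]; exact Submodule.one_le.mp le_rfl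
    | succ t ih => rw [pow_succ]; exact mul_mem_HS ih hf rfl
  have h2 := h0 (f ^ (k + 1)) (by rw [hk]; exact h1 _)
  rw [map_pow, hev f hf] at h2
  exact hφ (pow_eq_zero_iff (by omega) |>.mp h2)

variable [Infinite K]

lemma small_up {p : ℕ} (hW : W ≤ HS K r (p + 1)) (hc : cd (p + 1) W ≤ p + 1) :
    cd (p + 2) (HS K r 1 * W) ≤ cd (p + 1) W := by
  obtain ⟨ℓ, hℓ, hg⟩ := (gs_big hW).ex
  have := cd_up' hW hℓ
  rw [green0 hW hc hg hℓ, HS_mul, add_comm 1 (p+1), cd_top] at this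
  omega

lemma small_NA {p : ℕ} (hW : W ≤ HS K r (p + 1)) (hc : cd (p + 1) W ≤ p + 1)
    (hpos : 0 < cd (p + 1) W) (hup : cd (p + 1) W ≤ cd (p + 2) (HS K r 1 * W)) : NA (p + 1) W := by
  obtain ⟨ℓ, hℓ, hg⟩ := (gs_big hW).ex
  exact CL hW hℓ (green0 hW hc hg hℓ) hpos hup

end CL


section E

variable {K : Type*} [Field K] {r : ℕ} {n k : ℕ} {A B W V M : Submodule K (MvPolynomial (Fin r) K)}
  {ℓ F : MvPolynomial (Fin r) K}

lemma cd_F {m N : ℕ} (hle : B ⊔ (HS K r m).map (LinearMap.mulLeft K F) ≤ HS K r N)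
    (hM : M ≤ HS K r m) (hF : ∀ x ∈ M, F * x ∈ B) :
    cd N B ≤ cd m M + cd N (B ⊔ (HS K r m).map (LinearMap.mulLeft K F)) := by
  have h0 : cd m (col m B F) ≤ cd m M := cd_anti (fun x hx => mem_col.mpr ⟨hM hx, hF x hx⟩) col_le
  have := fd_of_le hle
  rw [cd_col, AA_range] at h0
  have h := fr_map B.mkQ (B ⊔ (HS K r m).map (LinearMap.mulLeft K F))
  rw [Submodule.ker_mkQ, inf_eq_right.mpr le_sup_left, Submodule.map_sup,
    ← Submodule.map_comp, Submodule.mkQ_map_self, bot_sup_eq] at h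
  have h1 := fr_le hle
  unfold cd at *
  omega

lemma E0 (hA : A ≤ HS K r n) (hF : F ∈ HS K r n) (j : ℕ) :
    cd (j + n + n) (HS K r (j + n) * A) ≤ cd (j + n) (HS K r j * A) +
      cd (j + n + n) (HS K r (j + n) * (A ⊔ Submodule.span K {F})) := by
  have e : HS K r (j + n) * (A ⊔ Submodule.span K {F}) =
      HS K r (j + n) * A ⊔ (HS K r (j + n)).map (LinearMap.mulLeft K F) := by
    rw [Submodule.mul_sup]
    congr 1
    ext f
    rw [mul_comm]
    simp [Submodule.mem_span_singleton_mul]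
  rw [e]
  apply cd_F
  · rw [← e]
    exact up_le _ (sup_le hA (by simpa using hF))
  · exact up_le _ hA
  · intro x hx
    have := Submodule.mul_mem_mul hF hx
    rw [← mul_assoc, HS_mul, add_comm n j] at this
    exact this

lemma exF (hAW : A ≤ W) (hW : W ≤ HS K r n) (hc : cd n A ≤ cd n W + (k + 1)) :
    ∃ F ∈ HS K r n, A ⊔ Submodule.span K {F} ≤ W ∧ cd n (A ⊔ Submodule.span K {F}) ≤ cd n W + k := by
  by_cases h : A = W
  · refine ⟨0, zero_mem _, ?_, ?_⟩
    · simp [h]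
    · simp [h]
  · obtain ⟨F, hF, hFA⟩ : ∃ F ∈ W, F ∉ A := by
      by_contra hcon
      push Not at hcon
      exact h (le_antisymm hAW hcon)
    have h1 : A ⊔ Submodule.span K {F} ≤ W := sup_le hAW (by simpa using hF)
    refine ⟨F, hW hF, h1, ?_⟩
    by_contra hcon
    have := eq_of_cd_le (le_sup_left : A ≤ A ⊔ Submodule.span K {F}) (h1.trans hW) (by omega)
    apply hFA
    rw [this]
    exact Submodule.mem_sup_right (Submodule.mem_span_singleton_self F)

lemma full_mono {k0 k : ℕ} (h : HS K r k0 * W = HS K r (k0 + n)) (hk : k0 ≤ k) :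
    HS K r k * W = HS K r (k + n) := by
  obtain ⟨d, rfl⟩ := Nat.exists_eq_add_of_le' hk
  rw [← up_up, h, HS_mul, add_assoc]

lemma E_bound (hA : A ≤ HS K r n) (hF : F ∈ HS K r n) {j0 C : ℕ}
    (hC : ∀ i, cd (j0 + i * n + n) (HS K r (j0 + i * n) * (A ⊔ Submodule.span K {F})) ≤ C) (i : ℕ) :
    cd (j0 + i * n + n) (HS K r (j0 + i * n) * A) ≤ cd (j0 + n) (HS K r j0 * A) + i * C := by
  induction i with
  | zero => simp
  | succ i ih =>
    have h := E0 hA hF (j0 + i * n)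
    have h2 := hC (i + 1)
    have e : j0 + (i + 1) * n = j0 + i * n + n := by ring
    rw [e] at h2 ⊢
    have e2 : (i + 1) * C = i * C + C := by ring
    omega

variable [Infinite K]

def NAg (n : ℕ) (V : Submodule K (MvPolynomial (Fin r) K)) : Prop :=
  ∃ U : Set (MvPolynomial (Fin r) K), Big U ∧ ∀ ℓ ∈ U, ℓ ∈ HS K r 1 → NA n (V ⊔ LL ℓ n)

def NAgg (n : ℕ) (V : Submodule K (MvPolynomial (Fin r) K)) : Prop :=
  ∃ U : Set (MvPolynomial (Fin r) K), Big U ∧ ∀ ℓ ∈ U, ℓ ∈ HS K r 1 → NAg n (V ⊔ LL ℓ n)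

lemma NAg.na (hV : V ≤ HS K r n) (h : NAg n V) : NA n V := by
  obtain ⟨U, hU, h⟩ := h
  obtain ⟨ℓ, h1, h2⟩ := hU.ex
  exact (h ℓ h2 h1).mono le_sup_left (sup_le hV (LL_le h1 _))

lemma E1 {q : ℕ} (hV : V ≤ HS K r (q + 1)) (hVW : HS K r 1 * V ≤ W) (hW : W ≤ HS K r (q + 2))
    (hc : cd (q + 2) (HS K r 1 * V) ≤ cd (q + 2) W + 1) (hna : NAg (q + 1) V) : NA (q + 2) W := by
  intro k0 hk0
  obtain ⟨F, hF, hle, hcF⟩ := exF (k := 0) hVW hW hc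
  have hWe := eq_of_cd_le hle hW hcF
  have hA := hVW.trans hW
  have hb := E_bound hA hF (j0 := k0) (C := 0) (fun i => by
    rw [hWe, full_mono hk0 (by omega), cd_top])
  set D := cd (k0 + (q + 2)) (HS K r k0 * (HS K r 1 * V)) with hD
  have hbD := hb D
  rw [up_up] at hbD
  set j := k0 + D * (q + 2) with hj
  have hjD : D ≤ j := by rw [hj]; nlinarith
  obtain ⟨U, hU, hna⟩ := hna
  have hle2 : HS K r (j + 1) * V ≤ HS K r (j + (q + 2)) := by
    have := up_le (j + 1) hV
    rwa [show j + 1 + (q + 1) = j + (q + 2) by ring] at this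
  obtain ⟨ℓ, hℓ, hℓU, hℓg⟩ := (hU.inter (gs_big hle2)).ex
  have h3 := green0 hle2 (by omega) hℓg hℓ
  apply hna ℓ hℓU hℓ (j + 1)
  rw [up_sup, show j + 1 + q + 1 = j + (q + 2) by ring, h3]
  congr 1; ring

lemma TT_big (t C : ℕ) : ∀ s, s ≤ C → (s + 1) * (t + 1) ≤ TT t (s + 1) + (s + 1) * C := by
  intro s
  induction s with
  | zero => intro _; simp [TT]
  | succ s ih =>
    intro hs
    have := ih (by omega)
    have e : TT t (s + 1 + 1) = TT t (s + 1) + (t + 1 - (s + 1)) := rfl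
    have e1 : (s + 1 + 1) * (t + 1) = (s + 1) * (t + 1) + (t + 1) := by ring
    have e2 : (s + 1 + 1) * C = (s + 1) * C + C := by ring
    omega

lemma E2 {q : ℕ} (hV : V ≤ HS K r (q + 1)) (hVW : HS K r 1 * V ≤ W) (hW : W ≤ HS K r (q + 2))
    (hc : cd (q + 2) (HS K r 1 * V) ≤ cd (q + 2) W + 2) (hna : NAgg (q + 1) V) : NA (q + 2) W := by
  intro k0 hk0
  obtain ⟨F, hF, hle, hcF⟩ := exF (k := 1) hVW hW hc
  obtain ⟨G, hG, hle2, hcG⟩ := exF (k := 0) hle hW hcF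
  have hWe := eq_of_cd_le hle2 hW hcG
  have hA := hVW.trans hW
  have hb1 := E_bound (hle.trans hW) hG (j0 := k0) (C := 0) (fun i => by
    rw [hWe, full_mono hk0 (by omega), cd_top])
  have hb := E_bound hA hF (fun i => (hb1 i).trans (le_of_eq (by rw [mul_zero, add_zero])))
  set C := cd (k0 + (q + 2)) (HS K r k0 * (HS K r 1 * V ⊔ Submodule.span K {F})) with hC
  set D := cd (k0 + (q + 2)) (HS K r k0 * (HS K r 1 * V)) with hD
  obtain ⟨i, hi⟩ : ∃ i, i = D + C * C + C + 1 := ⟨_, rfl⟩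
  have hbD := hb i
  rw [up_up] at hbD
  set j := k0 + i * (q + 2) with hj
  have hji : i ≤ j := by rw [hj]; nlinarith
  obtain ⟨U, hU, hna⟩ := hna
  have hle2 : HS K r (j + 1) * V ≤ HS K r (j + (q + 2)) := by
    have := up_le (j + 1) hV
    rwa [show j + 1 + (q + 1) = j + (q + 2) by ring] at this
  obtain ⟨ℓ, hℓ, hℓU, hℓg⟩ := (hU.inter (gs_big hle2)).ex
  have hCt : C ≤ j + (q + 2) := by nlinarith
  have h3 := green (s := C) hle2 hCt (by
    refine lt_of_le_of_lt hbD ?_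
    have := TT_big (j + (q + 2)) C C le_rfl
    nlinarith) hℓg
  have hle3 := sup_le hle2 (LL_le hℓ (j + (q + 2)))
  obtain ⟨U', hU', hna⟩ := hna ℓ hℓU hℓ
  obtain ⟨ℓ', hℓ', hℓU', hℓg'⟩ := (hU'.inter (gs_big hle3)).ex
  have h4 := green0 hle3 (by omega) hℓg' hℓ'
  apply hna ℓ' hℓU' hℓ' (j + 1)
  rw [up_sup, up_sup, show j + 1 + q + 1 = j + (q + 2) by ring, h4]
  congr 1; ring

end E


set_option linter.unusedSectionVars false

section PL

variable {K : Type*} [Field K] [Infinite K] {r : ℕ} {n q s : ℕ}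
  {W V Z : Submodule K (MvPolynomial (Fin r) K)} {ℓ : MvPolynomial (Fin r) K}

lemma NAg.up (h : NAg (q + 1) V) : NAg (q + 2) (HS K r 1 * V) := by
  obtain ⟨U, hU, h⟩ := h
  refine ⟨U, hU, fun ℓ h1 h2 => ?_⟩
  have := (h ℓ h1 h2).up
  rwa [up1_sup] at this

lemma NAgg.up (h : NAgg (q + 1) V) : NAgg (q + 2) (HS K r 1 * V) := by
  obtain ⟨U, hU, h⟩ := h
  refine ⟨U, hU, fun ℓ h1 h2 => ?_⟩
  have := (h ℓ h1 h2).up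
  rwa [up1_sup] at this

lemma TT_top (q : ℕ) : TT (q + 1) (q + 2) = TT q (q + 1) + (q + 2) := by
  have h1 : TT (q + 1) (q + 2) = TT (q + 1) (q + 1) + (q + 1 + 1 - (q + 1)) := rfl
  have h2 := TT_b q (q + 1) le_rfl
  omega

lemma PL_aux (hV : V ≤ HS K r (q + 1)) (hc : cd (q + 1) V ≤ TT (q + 1) (q + 2))
    (hℓ : ℓ ∈ gs (q + 1) V) (hℓ1 : ℓ ∈ HS K r 1) {ℓ' : MvPolynomial (Fin r) K}
    (hℓ' : ℓ' ∈ gs (q + 1) (V ⊔ LL ℓ (q + 1))) :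
    cd (q + 1) (V ⊔ LL ℓ (q + 1)) ≤ q + 2 ∧
      cd (q + 1) (V ⊔ LL ℓ (q + 1) ⊔ LL ℓ' (q + 1)) ≤ 1 := by
  have h1 := green_top hV hc hℓ
  refine ⟨h1, ?_⟩
  have hY := sup_le hV (LL_le hℓ1 (q + 1))
  apply green hY (by omega) _ hℓ'
  refine lt_of_le_of_lt h1 ?_
  simp [TT]

lemma PL0 (hV : V ≤ HS K r (q + 1)) (hc : cd (q + 1) V ≤ TT (q + 1) (q + 2)) :
    cd (q + 2) (HS K r 1 * V) ≤ cd (q + 1) V + (q + 3) := by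
  obtain ⟨ℓ, hℓ, hg⟩ := (gs_big hV).ex
  have hY := sup_le hV (LL_le hℓ (q + 1))
  obtain ⟨ℓ', hℓ', hg'⟩ := (gs_big hY).ex
  have hY' := sup_le hY (LL_le hℓ' (q + 1))
  obtain ⟨h1, h2⟩ := PL_aux hV hc hg hℓ hg'
  have h3 := cd_up' hV hℓ
  have h4 := cd_up' hY hℓ'
  have h5 := small_up hY' (by omega)
  omega

lemma PL (hV : V ≤ HS K r (q + 1)) (hc : cd (q + 1) V ≤ TT (q + 1) (q + 2))
    (hup : cd (q + 1) V + (q + 3) ≤ cd (q + 2) (HS K r 1 * V)) : NAgg (q + 1) V := by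
  refine ⟨_, gs_big hV, fun ℓ hg hℓ => ?_⟩
  have hY := sup_le hV (LL_le hℓ (q + 1))
  refine ⟨_, gs_big hY, fun ℓ' hg' hℓ' => ?_⟩
  have hY' := sup_le hY (LL_le hℓ' (q + 1))
  obtain ⟨h1, h2⟩ := PL_aux hV hc hg hℓ hg'
  have h3 := cd_up' hV hℓ
  have h4 := cd_up' hY hℓ'
  have h5 := small_up hY' (by omega)
  exact small_NA hY' (by omega) (by omega) (by omega)

lemma main_Z (hW : W ≤ HS K r (q + 2)) (hs : 1 ≤ s) (hsn : s ≤ q + 2)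
    (h1 : TT (q + 2) s ≤ cd (q + 2) W) (h2 : cd (q + 2) W < TT (q + 2) (s + 1))
    (hup : cd (q + 2) W + s ≤ cd (q + 3) (HS K r 1 * W) + 1) (hna : ¬ NA (q + 2) W) :
    ∃ Z : Submodule K (MvPolynomial (Fin r) K), Z ≤ HS K r (q + 1) ∧ HS K r 1 * Z ≤ W ∧
      cd (q + 1) Z + s = cd (q + 2) W ∧
      ∀ ℓ ∈ gs (q + 2) W, ℓ ∈ HS K r 1 → Z = col (q + 1) W ℓ := by
  obtain ⟨ℓ, hℓ, hg⟩ := (gs_big hW).ex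
  have hY := sup_le hW (LL_le hℓ (q + 2))
  have hb := green hW hsn h2 hg
  have hb1 : cd (q + 3) (HS K r 1 * W) ≤
      cd (q + 3) (HS K r 1 * (W ⊔ LL ℓ (q + 2))) + cd (q + 2) W := cd_up' hW hℓ
  have hb' : cd (q + 1 + 1) (W ⊔ LL ℓ (q + 2)) ≤ q + 1 + 1 := hb.trans hsn
  have hb2 : cd (q + 3) (HS K r 1 * (W ⊔ LL ℓ (q + 2))) ≤ cd (q + 2) (W ⊔ LL ℓ (q + 2)) :=
    small_up hY hb'
  have hpos : 0 < cd (q + 2) W := by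
    have := TT_mono (q + 2) hs
    simp [TT] at this
    omega
  have hb0 : cd (q + 2) (W ⊔ LL ℓ (q + 2)) ≠ 0 := by
    intro h0
    exact hna (CL hW hℓ (eq_of_cd_zero hY h0) hpos (by
      change cd (q + 2) W ≤ cd (q + 3) _
      omega))
  have hlt : ¬ cd (q + 2) (W ⊔ LL ℓ (q + 2)) ≤ cd (q + 3) (HS K r 1 * (W ⊔ LL ℓ (q + 2))) := by
    intro h
    exact hna ((small_NA hY hb' (Nat.pos_of_ne_zero hb0) h).mono le_sup_left hY)
  have hbs : cd (q + 2) (W ⊔ LL ℓ (q + 2)) = s := by omega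
  have hinj : ∀ f ∈ HS K r (q + 2), ℓ * f ∈ HS K r 1 * W → f ∈ W := by
    have ha := cd_add (up1_le hW) hℓ
    rw [← up1_sup] at ha
    have hle : W ≤ col (q + 2) (HS K r 1 * W) ℓ := fun w hw =>
      mem_col.mpr ⟨hW hw, Submodule.mul_mem_mul hℓ hw⟩
    have hle' := cd_anti hle col_le
    have e := eq_of_cd_le hle col_le (by
      change cd (q + 3) _ = cd (q + 3) _ + _ at ha
      change _ ≤ cd (q + 2) _
      change cd (q + 3) _ = cd (q + 3) (HS K r 1 * (W ⊔ LL ℓ (q + 2))) + cd (q + 2) _ at ha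
      omega)
    intro f hf hff
    rw [e]; exact mem_col.mpr ⟨hf, hff⟩
  have hcz := cd_add hW hℓ
  change cd (q + 2) W = cd (q + 2) (W ⊔ LL ℓ (q + 2)) + _ at hcz
  have hsoc : ∀ x ∈ HS K r 1, ∀ z ∈ col (q + 1) W ℓ, x * z ∈ W := by
    intro x hx z hz
    obtain ⟨hz1, hz2⟩ := mem_col.mp hz
    exact socle hW hℓ hg hinj hz1 hz2 hx
  refine ⟨col (q + 1) W ℓ, col_le, Submodule.mul_le.mpr hsoc, by omega, ?_⟩
  intro ℓ2 hg2 hℓ2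
  apply eq_of_cd_le (n := q + 1) _ col_le
  · have hcz2 := cd_add hW hℓ2
    change cd (q + 2) W = cd (q + 2) (W ⊔ LL ℓ2 (q + 2)) + _ at hcz2
    have := gs_le hg2 hℓ
    have := gs_le hg hℓ2
    omega
  · intro z hz
    exact mem_col.mpr ⟨(mem_col.mp hz).1, hsoc ℓ2 hℓ2 z hz⟩

/-- finishing step when the slice of `Z` persists -/
lemma finish (hZ : Z ≤ HS K r (q + 1)) (hZW : HS K r 1 * Z ≤ W) (hW : W ≤ HS K r (q + 2))
    (hc : cd (q + 1) Z + s = cd (q + 2) W) (hs : 1 ≤ s) (hsn : s ≤ q + 1) (hℓ : ℓ ∈ HS K r 1)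
    (hb : cd (q + 1) (Z ⊔ LL ℓ (q + 1)) ≤ s) : NA (q + 2) W := by
  have hY := sup_le hZ (LL_le hℓ (q + 1))
  have h1 := cd_up' hZ hℓ
  have h2 := small_up hY (by omega)
  have h3 := cd_anti hZW hW
  have e := eq_of_cd_le hZW hW (by omega)
  rw [← e]
  exact ((small_NA hY (by omega) (by omega) (by omega)).mono le_sup_left hY).up

lemma NAgg_one (hZ : Z ≤ HS K r 1) (hc : 3 ≤ cd 1 Z) : NAgg 1 Z := by
  have e : ∀ ℓ : MvPolynomial (Fin r) K, LL ℓ 1 = Submodule.span K {ℓ} := fun ℓ => by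
    rw [LL, HS_zero, mul_one]
  refine ⟨_, gs_big hZ, fun ℓ _ hℓ => ?_⟩
  have hY := sup_le hZ (LL_le hℓ 1)
  refine ⟨_, gs_big hY, fun ℓ' _ hℓ' => ?_⟩
  have hY' := sup_le hY (LL_le hℓ' 1)
  apply NA1 hY'
  intro h
  have h1 := cd_add_one hZ ℓ
  have h2 := cd_add_one hY ℓ'
  rw [← e] at h1 h2
  rw [h, cd_top] at h2
  omega

theorem main_na (q : ℕ) : ∀ (s : ℕ) (W : Submodule K (MvPolynomial (Fin r) K)), W ≤ HS K r (q + 1) →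
    1 ≤ s → s ≤ q + 1 → TT (q + 1) s ≤ cd (q + 1) W → cd (q + 1) W < TT (q + 1) (s + 1) →
    cd (q + 1) W + s ≤ cd (q + 2) (HS K r 1 * W) + 1 → NA (q + 1) W := by
  induction q with
  | zero =>
    intro s W hW hs _ h1 _ _
    apply NA1 hW
    rintro rfl
    have := TT_mono (0 + 1) hs
    rw [show cd (0 + 1) (HS K r 1) = 0 from cd_top] at h1
    simp [TT] at this h1
    omega
  | succ q ih =>
    intro s W hW hs hsn h1 h2 hup
    by_contra hna
    obtain ⟨Z, hZ, hZW, hcZ, hcol⟩ := main_Z hW hs hsn h1 h2 hup hna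
    apply hna
    have hlow := TT_b (q + 1) s hsn
    have hZup : cd (q + 2) W ≤ cd (q + 2) (HS K r 1 * Z) := cd_anti hZW hW
    have eW : cd (q + 1 + 1) W = cd (q + 2) W := rfl
    have eT : TT (q + 1 + 1) = TT (q + 2) := rfl
    rw [eW] at h1 h2 hup
    rw [eT] at h1 h2 hlow
    by_cases hi : cd (q + 1) Z < TT (q + 1) (s + 1)
    · have hs' : s ≤ q + 1 := by
        by_contra hcon
        obtain rfl : s = q + 2 := by omega
        have : TT (q + 1) (q + 2 + 1) = TT (q + 1) (q + 2) + (q + 1 + 1 - (q + 2)) := rfl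
        omega
      obtain ⟨ℓ, hℓ, hg⟩ := (gs_big hZ).ex
      exact finish hZ hZW hW hcZ hs hs' hℓ (green hZ hs' hi hg)
    by_cases hii : s + 1 ≤ q + 1
    · have hb := TT_b (q + 1) (s + 1) (by omega)
      have hn : TT (q + 1) (s + 1 + 1) = TT (q + 1) (s + 1) + (q + 1 + 1 - (s + 1)) := rfl
      have hZlt : cd (q + 1) Z < TT (q + 1) (s + 1 + 1) := by
        change TT (q + 2) (s + 1) = _ at hb
        omega
      by_cases hE : HS K r 1 * Z = W
      · rw [← hE]
        apply NA.up
        refine ih (s + 1) Z hZ (by omega) hii (by omega) hZlt ?_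
        rw [hE]; omega
      · have hne : ¬ cd (q + 2) (HS K r 1 * Z) ≤ cd (q + 2) W := fun h => hE (eq_of_cd_le hZW hW h)
        have hstep : ∀ ℓ ∈ gs (q + 1) Z, ℓ ∈ HS K r 1 → NA (q + 1) (Z ⊔ LL ℓ (q + 1)) ∧
            cd (q + 2) (HS K r 1 * Z) ≤ cd (q + 2) W + 1 := by
          intro ℓ hg hℓ
          have hY := sup_le hZ (LL_le hℓ (q + 1))
          have g1 := green hZ hii hZlt hg
          have g2 := cd_up' hZ hℓ
          have g3 := small_up hY (by omega)
          exact ⟨small_NA hY (by omega) (by omega) (by omega), by omega⟩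
        obtain ⟨ℓ, hℓ, hg⟩ := (gs_big hZ).ex
        exact E1 hZ hZW hW (hstep ℓ hg hℓ).2 ⟨_, gs_big hZ, fun ℓ hg hℓ => (hstep ℓ hg hℓ).1⟩
    · -- plane case
      have hs1 : q + 1 ≤ s := by omega
      have ht1 := TT_top (q + 1)
      change TT (q + 2) (q + 3) = TT (q + 1) (q + 2) + (q + 3) at ht1
      have hZe : cd (q + 1) Z = TT (q + 1) (q + 2) := by
        rcases Nat.lt_or_ge s (q + 2) with h | h
        · obtain rfl : s = q + 1 := by omega
          have hb := TT_b (q + 1) (q + 2) (by omega)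
          change TT (q + 2) (q + 2) = _ at hb
          change ¬ cd (q + 1) Z < TT (q + 1) (q + 2) at hi
          change cd (q + 2) W < TT (q + 2) (q + 2) at h2
          omega
        · obtain rfl : s = q + 2 := by
            change s ≤ q + 2 at hsn
            omega
          change cd (q + 2) W < TT (q + 2) (q + 3) at h2
          omega
      have hPL0 := PL0 hZ hZe.le
      obtain ⟨ℓ, hℓ, hgW, hgZ⟩ := ((gs_big hW).inter (gs_big hZ)).ex
      have hβ := green_top hZ hZe.le hgZ
      by_cases hβ' : cd (q + 1) (Z ⊔ LL ℓ (q + 1)) ≤ q + 1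
      · have hY := sup_le hZ (LL_le hℓ (q + 1))
        have g2 := cd_up' hZ hℓ
        have g3 := small_up hY (by omega)
        exact finish hZ hZW hW hcZ hs (by omega) hℓ (by omega)
      refine E2 hZ hZW hW (by omega) ?_
      cases q with
      | zero => exact NAgg_one hZ (by rw [hZe]; simp [TT])
      | succ q =>
        have hZ2e := hcol ℓ hgW hℓ
        have hsoc : HS K r 1 * col (q + 1) Z ℓ ≤ Z := by
          rw [Submodule.mul_le]
          intro x hx z hz
          obtain ⟨hz1, hz2⟩ := mem_col.mp hz
          refine socle hZ hℓ hgZ (fun f hf hff => ?_) hz1 hz2 hx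
          rw [hZ2e]
          exact mem_col.mpr ⟨hf, hZW hff⟩
        have ht := TT_top (q + 1)
        have hc2 := cd_add hZ hℓ
        have hc3 : cd (q + 1) (col (q + 1) Z ℓ) = TT (q + 1) (q + 2) := by
          change cd (q + 2) Z = cd (q + 2) (Z ⊔ LL ℓ (q + 2)) + _ at hc2
          change cd (q + 2) Z = TT (q + 2) (q + 3) at hZe
          change cd (q + 2) (Z ⊔ LL ℓ (q + 2)) ≤ q + 3 at hβ
          change ¬ cd (q + 2) (Z ⊔ LL ℓ (q + 2)) ≤ q + 2 at hβ'
          change TT (q + 2) (q + 3) = TT (q + 1) (q + 2) + (q + 3) at ht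
          omega
        have hp := PL0 (K := K) col_le hc3.le
        have hZe' : cd (q + 2) Z = TT (q + 1) (q + 2) + (q + 3) := hZe.trans ht
        have e := eq_of_cd_le (n := q + 2) hsoc hZ (by omega)
        rw [← e]
        apply NAgg.up
        apply PL col_le hc3.le
        rw [e]; omega

end PL


section numerics

lemma TT_choose (n : ℕ) : TT n (n + 1) = Nat.choose (n + 2) 2 := by
  induction n with
  | zero => rfl
  | succ n ih =>
    rw [TT_top, ih, Nat.choose_succ_succ' (n + 2) 1, Nat.choose_one_right,
      add_comm]

lemma TT_shift (i s : ℕ) : TT (i + 1) (s + 1) = TT i s + (i + 2) := by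
  induction s with
  | zero => simp [TT]
  | succ s ih =>
    have h1 : TT (i + 1) (s + 1 + 1) = TT (i + 1) (s + 1) + (i + 1 + 1 - (s + 1)) := rfl
    have h2 : TT i (s + 1) = TT i s + (i + 1 - s) := rfl
    omega

lemma mac (n : ℕ) : ∀ s h, s ≤ n → TT n s ≤ h → h < TT n (s + 1) → macaulayUp n h = h + s := by
  induction n with
  | zero =>
    intro s h hs h1 h2
    obtain rfl : s = 0 := by omega
    simp [TT] at h2
    simp [macaulayUp, h2]
  | succ i ih =>
    intro s h hs h1 h2
    have ht1 : TT (i + 1) 1 = i + 2 := by simp [TT]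
    have hs1 : 1 ≤ s → i + 2 ≤ h := fun h' => by
      have := TT_mono (i + 1) h'
      omega
    have hs0 : s = 0 → h < i + 2 := by
      rintro rfl
      rw [zero_add, ht1] at h2
      exact h2
    rw [macaulayUp]
    split_ifs with h0
    · omega
    rcases Nat.eq_zero_or_pos s with hz | hz
    · have hg : Nat.findGreatest (fun b => Nat.choose b (i + 1) ≤ h) (h + i + 1) = i + 1 := by
        rw [Nat.findGreatest_eq_iff]
        refine ⟨by omega, fun _ => ?_, fun m hm _ hcon => ?_⟩
        · rw [Nat.choose_self]; omega
        · have : Nat.choose (i + 2) (i + 1) ≤ Nat.choose m (i + 1) := Nat.choose_le_choose _ hm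
          rw [show i + 2 = (i + 1) + 1 from rfl, Nat.choose_succ_self_right] at this
          have := hs0 hz
          omega
      rw [hg, Nat.choose_self, Nat.choose_self, ih 0 (h - 1) (by omega) (by simp [TT])
        (by have := hs0 hz; simp [TT]; omega)]
      omega
    · have hg : Nat.findGreatest (fun b => Nat.choose b (i + 1) ≤ h) (h + i + 1) = i + 2 := by
        have hh := hs1 hz
        rw [Nat.findGreatest_eq_iff]
        refine ⟨by omega, fun _ => ?_, fun m hm _ hcon => ?_⟩
        · rw [show i + 2 = (i + 1) + 1 from rfl, Nat.choose_succ_self_right]; omega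
        · have h3 : Nat.choose (i + 3) (i + 1) ≤ Nat.choose m (i + 1) := Nat.choose_le_choose _ hm
          have h4 := TT_choose (i + 1)
          have h5 : Nat.choose (i + 3) (i + 1) = Nat.choose (i + 1 + 2) 2 :=
            Nat.choose_symm_of_eq_add rfl
          have h6 := TT_mono (i + 1) (show s + 1 ≤ i + 1 + 1 by omega)
          omega
      obtain ⟨s, rfl⟩ : ∃ s', s = s' + 1 := ⟨s - 1, by omega⟩
      have e1 : Nat.choose (i + 2 + 1) (i + 2) = i + 3 := Nat.choose_succ_self_right _
      have e2 : Nat.choose (i + 2) (i + 1) = i + 2 := Nat.choose_succ_self_right _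
      have t1 := TT_shift i s
      have t2 := TT_shift i (s + 1)
      rw [hg, e1, e2, ih s (h - (i + 2)) (by omega) (by omega) (by omega)]
      omega

lemma ex_s (n h : ℕ) : ∀ N, h < TT n (N + 1) → ∃ s ≤ N, TT n s ≤ h ∧ h < TT n (s + 1) := by
  intro N
  induction N with
  | zero => intro hN; exact ⟨0, le_rfl, by simp [TT], hN⟩
  | succ N ih =>
    intro hN
    by_cases hc : h < TT n (N + 1)
    · obtain ⟨s, hs, h1⟩ := ih hc
      exact ⟨s, by omega, h1⟩
    · exact ⟨N + 1, le_rfl, by omega, hN⟩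

end numerics

section assemble

variable {K : Type*} [Field K] {r : ℕ} {n : ℕ} {W : Submodule K (MvPolynomial (Fin r) K)}

lemma hilb_eq (J : Ideal (MvPolynomial (Fin r) K)) (t : ℕ) :
    hilb J t = cd t (HS K r t ⊓ J.restrictScalars K) := by
  have h := fr_map (Ideal.Quotient.mkₐ K J).toLinearMap (HS K r t)
  have e : LinearMap.ker (Ideal.Quotient.mkₐ K J).toLinearMap = J.restrictScalars K := by
    ext f
    simp [Ideal.Quotient.eq_zero_iff_mem]
  rw [e] at h
  unfold hilb cd
  change finrank K ((HS K r t).map _) = _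
  omega

lemma comp_mul {w : MvPolynomial (Fin r) K} (hw : w ∈ HS K r n) (d : ℕ) (a : MvPolynomial (Fin r) K) :
    homogeneousComponent d (a * w) = if n ≤ d then homogeneousComponent (d - n) a * w else 0 := by
  have hcomp : ∀ i, homogeneousComponent i a * w ∈ HS K r (i + n) := fun i =>
    mul_mem_HS (homogeneousComponent_isHomogeneous i a) hw rfl
  conv_lhs => rw [← sum_homogeneousComponent a, Finset.sum_mul, map_sum]
  simp only [fun i => homogeneousComponent_of_mem (m := d) (hcomp i)]
  split_ifs with h
  · have : ∀ i, (d = i + n) ↔ (d - n = i) := fun i => by omega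
    simp only [this]
    rw [Finset.sum_ite_eq]
    split_ifs with h2
    · rfl
    · rw [homogeneousComponent_eq_zero _ _ (by simp at h2; omega), zero_mul]
  · apply Finset.sum_eq_zero
    intro i _
    rw [if_neg (by omega)]

lemma comp_span (hW : W ≤ HS K r n) {f : MvPolynomial (Fin r) K}
    (hf : f ∈ Ideal.span (W : Set (MvPolynomial (Fin r) K))) (k : ℕ) :
    homogeneousComponent (k + n) f ∈ HS K r k * W := by
  induction hf using Submodule.closure_induction with
  | zero => simp
  | add x y _ _ hx hy => rw [map_add]; exact add_mem hx hy
  | smul_mem a w hw =>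
    rw [smul_eq_mul, comp_mul (hW hw), if_pos (by omega), Nat.add_sub_cancel]
    exact Submodule.mul_mem_mul (homogeneousComponent_isHomogeneous k a) hw

lemma comp_span_zero {t : ℕ} {f : MvPolynomial (Fin r) K}
    (hf : f ∈ Ideal.span (HS K r (t + 1) : Set (MvPolynomial (Fin r) K))) :
    homogeneousComponent t f = 0 := by
  induction hf using Submodule.closure_induction with
  | zero => simp
  | add x y _ _ hx hy => rw [map_add, hx, hy, add_zero]
  | smul_mem a w hw =>
    rw [smul_eq_mul, comp_mul hw, if_neg (by omega)]

lemma span_anti (t : ℕ) : Ideal.span (HS K r (t + 1) : Set (MvPolynomial (Fin r) K)) ≤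
    Ideal.span (HS K r t : Set (MvPolynomial (Fin r) K)) := by
  rw [Ideal.span_le]
  intro f hf
  have hf' : f ∈ HS K r (t + 1) := hf
  rw [add_comm, ← HS_mul] at hf'
  induction hf' using Submodule.mul_induction_on' with
  | mem_mul_mem a _ b hb => exact Ideal.mul_mem_left _ _ (Ideal.subset_span hb)
  | add x hx y hy h1 h2 => 
    have e := HS_mul (K := K) (r := r) 1 t
    rw [add_comm] at e
    rw [e] at hx hy
    exact add_mem (h1 hx) (h2 hy)

lemma dim_pos (hW : W ≤ HS K r n) (hna : NA n W) :
    ¬ ringKrullDim (MvPolynomial (Fin r) K ⧸ Ideal.span (W : Set (MvPolynomial (Fin r) K))) ≤ 0 := by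
  intro hdim
  set I := Ideal.span (W : Set (MvPolynomial (Fin r) K)) with hI
  have h0 : Ring.KrullDimLE 0 (MvPolynomial (Fin r) K ⧸ I) := Ring.krullDimLE_iff.mpr (by simpa using hdim)
  have hart : IsArtinianRing (MvPolynomial (Fin r) K ⧸ I) :=
    IsNoetherianRing.isArtinianRing_of_krullDimLE_zero
  let c : ℕ →o (Submodule (MvPolynomial (Fin r) K ⧸ I) (MvPolynomial (Fin r) K ⧸ I))ᵒᵈ :=
    ⟨fun t => OrderDual.toDual (Ideal.map (Ideal.Quotient.mk I)
      (Ideal.span (HS K r t : Set (MvPolynomial (Fin r) K)))),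
      monotone_nat_of_le_succ (fun t => OrderDual.toDual_le_toDual.mpr (Ideal.map_mono (span_anti t)))⟩
  obtain ⟨N, hN⟩ := IsArtinian.monotone_stabilizes c
  have h1 := (hN (N + n) (by omega)).symm.trans (hN (N + n + 1) (by omega))
  have h2 : Ideal.map (Ideal.Quotient.mk I) (Ideal.span (HS K r (N + n) : Set (MvPolynomial (Fin r) K)))
    = Ideal.map (Ideal.Quotient.mk I) (Ideal.span (HS K r (N + n + 1) : Set (MvPolynomial (Fin r) K))) := h1
  apply hna N
  apply le_antisymm (up_le N hW)
  intro f hf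
  have h3 : Ideal.Quotient.mk I f ∈ Ideal.map (Ideal.Quotient.mk I)
      (Ideal.span (HS K r (N + n) : Set (MvPolynomial (Fin r) K))) :=
    Ideal.mem_map_of_mem _ (Ideal.subset_span hf)
  rw [h2, Ideal.mem_map_iff_of_surjective _ Ideal.Quotient.mk_surjective] at h3
  obtain ⟨g, hg, hgf⟩ := h3
  have h4 : f - g ∈ I := Ideal.Quotient.eq.mp hgf.symm
  have h5 := comp_span hW h4 N
  rw [map_sub, comp_span_zero hg, sub_zero, homogeneousComponent_of_mem hf, if_pos rfl] at h5
  exact h5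

lemma dim_integral {A B : Type*} [CommRing A] [CommRing B] [Algebra A B] [Algebra.IsIntegral A B] :
    ringKrullDim B ≤ ringKrullDim A := by
  refine Order.krullDim_le_of_strictMono (PrimeSpectrum.comap (algebraMap A B)) ?_
  intro p q hpq
  have : p.asIdeal < q.asIdeal := hpq
  exact Ideal.IsIntegral.comap_lt_comap this

lemma dim_le_two_aux {B : Type*} [CommRing B] [Algebra K B] (π : MvPolynomial (Fin r) K →ₐ[K] B)
    (hπ : Function.Surjective π) (hπW : ∀ w ∈ W, π w = 0) {p : ℕ} {ℓ ℓ' : MvPolynomial (Fin r) K}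
    (h : W ⊔ LL ℓ (p + 1) ⊔ LL ℓ' (p + 1) = HS K r (p + 1)) :
    ringKrullDim B ≤ 2 := by
  let φ : MvPolynomial (Fin 2) K →ₐ[K] B :=
    aeval ![π ℓ, π ℓ']
  let _ : Algebra (MvPolynomial (Fin 2) K) B := φ.toRingHom.toAlgebra
  have : IsScalarTower K (MvPolynomial (Fin 2) K) B :=
    IsScalarTower.of_algebraMap_eq (fun x => (φ.commutes x).symm)
  have hsm : ∀ (a : MvPolynomial (Fin 2) K) (b : B), a • b = φ a * b :=
    fun a b => Algebra.smul_def a b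
  have hφ0 : φ (X 0) = π ℓ := by simp [φ]
  have hφ1 : φ (X 1) = π ℓ' := by simp [φ]
  have hfgs : ∀ t, ∃ S : Finset (MvPolynomial (Fin r) K), Submodule.span K (S : Set _) = HS K r t :=
    fun t => homogeneousSubmodule_fg (Fin r) K t
  choose S hS using hfgs
  classical
  let T : Finset B :=
    ((Finset.range (p + 1)).biUnion S).image (π)
  let N : Submodule (MvPolynomial (Fin 2) K) B :=
    Submodule.span (MvPolynomial (Fin 2) K) (T : Set B)
  let NK : Submodule K (MvPolynomial (Fin r) K) :=
    (N.restrictScalars K).comap π.toLinearMap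
  have hNK : ∀ f, f ∈ NK ↔ π f ∈ N := fun f => Iff.rfl
  have hHS : ∀ t, HS K r t ≤ NK := by
    intro t
    induction t using Nat.strong_induction_on with
    | _ t ih =>
    by_cases ht : t < p + 1
    · rw [← hS t, Submodule.span_le]
      intro f hf
      apply Submodule.subset_span
      simp only [T, Finset.coe_image]
      refine ⟨f, ?_, rfl⟩
      simp only [Finset.coe_biUnion, Set.mem_iUnion]
      exact ⟨t, by simpa using ht, hf⟩
    · obtain ⟨d, rfl⟩ := Nat.exists_eq_add_of_le' (Nat.not_lt.mp ht)
      have e : HS K r (d + (p + 1)) = HS K r d * W ⊔ LL ℓ (d + p + 1) ⊔ LL ℓ' (d + p + 1) := by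
        rw [← HS_mul, ← h, up_sup, up_sup]
      rw [e]
      have hl : ∀ (i : Fin 2) (m : MvPolynomial (Fin r) K), φ (X i) = π m →
          LL m (d + p + 1) ≤ NK := by
        intro i m him f hf
        obtain ⟨g, hg, rfl⟩ := mem_LL_succ.mp hf
        have h1 := ih (d + p) (by omega) hg
        rw [hNK] at h1 ⊢
        rw [map_mul, ← him, ← hsm]
        exact N.smul_mem _ h1
      refine sup_le (sup_le ?_ (hl 0 ℓ hφ0)) (hl 1 ℓ' hφ1)
      rw [Submodule.mul_le]
      intro a _ w hw
      rw [hNK, map_mul, hπW w hw, mul_zero]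
      exact zero_mem _
  have hfin : Module.Finite (MvPolynomial (Fin 2) K) B := by
    refine ⟨⟨T, ?_⟩⟩
    rw [eq_top_iff]
    intro b _
    obtain ⟨f, rfl⟩ := hπ b
    have : f ∈ NK := by
      rw [← sum_homogeneousComponent f]
      exact Submodule.sum_mem _ fun i _ => hHS i (homogeneousComponent_isHomogeneous i f)
    exact (hNK f).mp this
  have := dim_integral (A := MvPolynomial (Fin 2) K) (B := B)
  refine this.trans ?_
  rw [MvPolynomial.ringKrullDim_of_isNoetherianRing, ringKrullDim_eq_zero_of_field]
  simp

lemma dim_le_two {p : ℕ} {ℓ ℓ' : MvPolynomial (Fin r) K}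
    (h : W ⊔ LL ℓ (p + 1) ⊔ LL ℓ' (p + 1) = HS K r (p + 1)) :
    ringKrullDim (MvPolynomial (Fin r) K ⧸ Ideal.span (W : Set (MvPolynomial (Fin r) K))) ≤ 2 :=
  dim_le_two_aux (Ideal.Quotient.mkₐ K _) (Ideal.Quotient.mkₐ_surjective K _)
    (fun w hw => Ideal.Quotient.eq_zero_iff_mem.mpr (Ideal.subset_span hw)) h

lemma one_or_two (d : WithBot ℕ∞) (h0 : ¬ d ≤ 0) (h2 : d ≤ 2) : d = 1 ∨ d = 2 := by
  induction d with
  | bot => exact absurd bot_le h0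
  | coe d =>
    induction d with
    | top => exact absurd h2 (by decide)
    | coe m =>
      have h0' : ¬ m ≤ 0 := fun h => h0 (by exact_mod_cast h)
      have h2' : m ≤ 2 := by
        have : ((m : ℕ∞) : WithBot ℕ∞) ≤ ((2 : ℕ) : ℕ∞) := h2
        exact_mod_cast this
      obtain rfl | rfl : m = 1 ∨ m = 2 := by omega
      · left; rfl
      · right; rfl

end assemble

theorem final {K : Type*} [Field K] [Infinite K] {r : ℕ}
    (J : Ideal (MvPolynomial (Fin r) K)) (n : ℕ)
    (hlow : n + 1 ≤ hilb J n)
    (hhigh : hilb J n < Nat.choose (n + 2) 2)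
    (hamg : hilb J (n + 1) + 1 = macaulayUp n (hilb J n)) :
    ringKrullDim (MvPolynomial (Fin r) K ⧸ compIdeal J n) = 1 ∨
      ringKrullDim (MvPolynomial (Fin r) K ⧸ compIdeal J n) = 2 := by
  cases n with
  | zero => simp at hhigh; omega
  | succ q =>
    rw [← TT_choose] at hhigh
    obtain ⟨s, hs, h1, h2⟩ := ex_s _ _ _ hhigh
    rw [mac _ s _ hs h1 h2] at hamg
    have hs1 : 1 ≤ s := by
      by_contra hcon
      obtain rfl : s = 0 := by omega
      simp [TT] at h2
      omega
    set W := HS K r (q + 1) ⊓ J.restrictScalars K with hWdef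
    have hW : W ≤ HS K r (q + 1) := inf_le_left
    have hc : hilb J (q + 1) = cd (q + 1) W := hilb_eq J (q + 1)
    rw [hc] at h1 h2 hamg hhigh
    have hle : HS K r 1 * W ≤ HS K r (q + 1 + 1) ⊓ J.restrictScalars K := by
      refine le_inf (up1_le hW) ?_
      rw [Submodule.mul_le]
      intro a _ w hw
      exact J.mul_mem_left a hw.2
    have h3 := cd_anti hle inf_le_left
    rw [← hilb_eq] at h3
    have hna : NA (q + 1) W := main_na q s W hW hs1 hs h1 h2 (by
      change _ ≤ cd (q + 1 + 1) _ + 1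
      omega)
    have hI : compIdeal J (q + 1) = Ideal.span (W : Set (MvPolynomial (Fin r) K)) := by
      rw [compIdeal, Set.inter_comm]; rfl
    rw [hI]
    obtain ⟨ℓ, hℓ, hg⟩ := (gs_big hW).ex
    have hY := sup_le hW (LL_le hℓ (q + 1))
    have g1 := green hW le_rfl hhigh hg
    obtain ⟨ℓ', hℓ', hg'⟩ := (gs_big hY).ex
    exact one_or_two _ (dim_pos hW hna) (dim_le_two (green0 hY g1 hg' hℓ'))

end AMG

/-- **Theorem (almost maximal growth, curve case).**
Let `K` be an algebraically closed field, `S = K[x_1,…,x_r]`, `J ⊆ S` a homogeneous ideal and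
`A = S/J`.  Assume `n + 1 ≤ h_A(n) < C(n+2,2)` (so the `n`-binomial expansion of `h_A(n)` begins
with `C(n+1,n)`), and that `h_A(n+1) = h_A(n)^{⟨n⟩} - 1`, i.e. the growth from degree `n` to
degree `n+1` is one less than maximal.  Then the base locus of `[J]_n` in `ℙ^{r-1}` is nonempty
of dimension `0` or `1`; equivalently, the Krull dimension of `S/⟨[J]_n⟩` is `1` or `2`. -/
theorem almostMaximalGrowth_baseLocus_dim_zero_or_one
    {K : Type*} [Field K] [IsAlgClosed K] {r : ℕ}
    (J : Ideal (MvPolynomial (Fin r) K))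
    (hJhom : ∀ f ∈ J, ∀ t : ℕ, homogeneousComponent t f ∈ J)
    (n : ℕ)
    (hlow : n + 1 ≤ hilb J n)
    (hhigh : hilb J n < Nat.choose (n + 2) 2)
    (hamg : hilb J (n + 1) + 1 = macaulayUp n (hilb J n)) :
    ringKrullDim (MvPolynomial (Fin r) K ⧸ compIdeal J n) = 1 ∨
      ringKrullDim (MvPolynomial (Fin r) K ⧸ compIdeal J n) = 2 := by
  exact AMG.final J n hlow hhigh hamg
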